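/- arXiv:1710.11400 — 2 statements merged into one kernel-verified Lean document; each statement's English description precedes it below -/
import Mathlib

section
/- Every noncommutatively G-graded Lie algebra over a field has a universal G-graded enveloping algebra. -/
universe u v w x

/-- A unital associative `G`-graded `k`-algebra. -/
structure GradedAlg (k : Type u) (G : Type v) [Field k] [Group G] [DecidableEq G] where
  carrier : Type x
  [ring : Ring carrier]
  [alg : Algebra k carrier]
  grading : G → Submodule k carrier
  internal : DirectSum.IsInternal grading
  one_mem : (1 : carrier) ∈ grading 1
  mul_mem : ∀ g h : G, ∀ a ∈ grading g, ∀ b ∈ grading h, a * b ∈ grading (g * h)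

attribute [instance] GradedAlg.ring GradedAlg.alg

namespace NCGraded

variable {k : Type u} {G : Type v} {L : Type w}
  [Field k] [Group G] [DecidableEq G] [LieRing L] [LieAlgebra k L]

/-- Homogeneous relations defining the universal graded enveloping algebra. -/
inductive Rel (ℒ : G → Submodule k L) : TensorAlgebra k L → TensorAlgebra k L → Prop
  | comm (g h : G) (a b : L) (ha : a ∈ ℒ g) (hb : b ∈ ℒ h) (hgh : g * h = h * g)
      (hab : ⁅a, b⁆ ∈ ℒ (g * h)) :
      Rel ℒ (TensorAlgebra.ι k a * TensorAlgebra.ι k b)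
        (TensorAlgebra.ι k b * TensorAlgebra.ι k a + TensorAlgebra.ι k ⁅a, b⁆)
  | ncomm (g h : G) (a b c d : L) (ha : a ∈ ℒ g) (hb : b ∈ ℒ h) (hgh : g * h ≠ h * g)
      (hc : c ∈ ℒ (g * h)) (hd : d ∈ ℒ (h * g)) (hab : ⁅a, b⁆ = c + d) :
      Rel ℒ (TensorAlgebra.ι k a * TensorAlgebra.ι k b) (TensorAlgebra.ι k c)

/-- The underlying algebra of the universal graded enveloping algebra. -/
abbrev Env (ℒ : G → Submodule k L) : Type (max u w) := RingQuot (Rel ℒ)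

/-- The canonical map. -/
noncomputable def inc (ℒ : G → Submodule k L) : L →ₗ[k] Env ℒ :=
  (RingQuot.mkAlgHom k (Rel ℒ)).toLinearMap ∘ₗ TensorAlgebra.ι k

lemma inc_apply (ℒ : G → Submodule k L) (l : L) :
    inc ℒ l = RingQuot.mkAlgHom k (Rel ℒ) (TensorAlgebra.ι k l) := rfl

lemma inc_comm (ℒ : G → Submodule k L) {g h : G} {a b : L} (ha : a ∈ ℒ g) (hb : b ∈ ℒ h)
    (hgh : g * h = h * g) (hab : ⁅a, b⁆ ∈ ℒ (g * h)) :
    inc ℒ a * inc ℒ b = inc ℒ b * inc ℒ a + inc ℒ ⁅a, b⁆ := by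
  simpa [inc_apply] using RingQuot.mkAlgHom_rel k (Rel.comm g h a b ha hb hgh hab)

lemma inc_ncomm (ℒ : G → Submodule k L) {g h : G} {a b c d : L} (ha : a ∈ ℒ g) (hb : b ∈ ℒ h)
    (hgh : g * h ≠ h * g) (hc : c ∈ ℒ (g * h)) (hd : d ∈ ℒ (h * g)) (hab : ⁅a, b⁆ = c + d) :
    inc ℒ a * inc ℒ b = inc ℒ c := by
  simpa [inc_apply] using RingQuot.mkAlgHom_rel k (Rel.ncomm g h a b c d ha hb hgh hc hd hab)

lemma env_induction (ℒ : G → Submodule k L) {C : Env ℒ → Prop}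
    (halg : ∀ r : k, C (algebraMap k _ r)) (hinc : ∀ l, C (inc ℒ l))
    (hmul : ∀ a b, C a → C b → C (a * b)) (hadd : ∀ a b, C a → C b → C (a + b))
    (u : Env ℒ) : C u := by
  obtain ⟨t, rfl⟩ := RingQuot.mkAlgHom_surjective k (Rel ℒ) u
  induction t using TensorAlgebra.induction with
  | algebraMap r => simpa using halg r
  | ι l => exact hinc l
  | mul a b ha hb => simpa using hmul _ _ ha hb
  | add a b ha hb => simpa using hadd _ _ ha hb

lemma iSup_top {M : Type*} [AddCommGroup M] [Module k M] {ℒ : G → Submodule k M}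
    (hd : DirectSum.IsInternal ℒ) : iSup ℒ = ⊤ :=
  ((DirectSum.isInternal_submodule_iff_iSupIndep_and_iSup_eq_top ℒ).1 hd).2

lemma hom_induction {M : Type*} [AddCommGroup M] [Module k M] {ℒ : G → Submodule k M}
    (hd : DirectSum.IsInternal ℒ) {C : M → Prop}
    (h0 : C 0) (hadd : ∀ a b, C a → C b → C (a + b)) (hh : ∀ g, ∀ a ∈ ℒ g, C a) (l : M) : C l := by
  have hl : l ∈ iSup ℒ := by rw [iSup_top hd]; trivial
  exact Submodule.iSup_induction ℒ (motive := C) hl hh h0 hadd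

lemma inc_bracket (ℒ : G → Submodule k L) (hd : DirectSum.IsInternal ℒ)
    (hbr : ∀ g h : G, ∀ a ∈ ℒ g, ∀ b ∈ ℒ h, ⁅a, b⁆ ∈ ℒ (g * h) ⊔ ℒ (h * g)) (a b : L) :
    inc ℒ ⁅a, b⁆ = inc ℒ a * inc ℒ b - inc ℒ b * inc ℒ a := by
  induction a using hom_induction hd with
  | h0 => simp
  | hadd a a' h1 h2 => simp only [add_lie, map_add, h1, h2]; noncomm_ring
  | hh g a ha =>
    induction b using hom_induction hd with
    | h0 => simp
    | hadd a a' h1 h2 => simp only [lie_add, map_add, h1, h2]; noncomm_ring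
    | hh h b hb =>
      have hm := hbr g h a ha b hb
      by_cases hgh : g * h = h * g
      · rw [← hgh, sup_idem] at hm
        rw [inc_comm ℒ ha hb hgh hm]; abel
      · obtain ⟨c, hc, d, hd', hcd⟩ := Submodule.mem_sup.1 hm
        rw [inc_ncomm ℒ ha hb hgh hc hd' hcd.symm,
          inc_ncomm ℒ (c := -d) (d := -c) hb ha (Ne.symm hgh) (neg_mem hd') (neg_mem hc)
            (by rw [← lie_skew, ← hcd]; abel), ← hcd]
        simp

/-- The coaction on generators. -/
noncomputable def coact₀ (ℒ : G → Submodule k L) (hd : DirectSum.IsInternal ℒ) :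
    L →ₗ[k] MonoidAlgebra (Env ℒ) G :=
  (DirectSum.toModule k G _ (fun g => (MonoidAlgebra.lsingle (R := k) (S := Env ℒ) g) ∘ₗ
    (inc ℒ) ∘ₗ (ℒ g).subtype)) ∘ₗ
    (LinearEquiv.ofBijective (DirectSum.coeLinearMap ℒ) hd).symm.toLinearMap

lemma coact₀_apply (ℒ : G → Submodule k L) (hd : DirectSum.IsInternal ℒ) {g : G} {l : L}
    (hl : l ∈ ℒ g) : coact₀ ℒ hd l = MonoidAlgebra.single g (inc ℒ l) := by
  have : (LinearEquiv.ofBijective (DirectSum.coeLinearMap ℒ) hd).symm l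
      = DirectSum.lof k G (fun g => ℒ g) g ⟨l, hl⟩ := by
    rw [LinearEquiv.symm_apply_eq]
    exact (DirectSum.coeLinearMap_lof ℒ g ⟨l, hl⟩).symm
  simp only [coact₀, LinearMap.comp_apply, LinearEquiv.coe_coe, this, DirectSum.toModule_lof]
  simp

/-- The coaction. -/
noncomputable def coact (ℒ : G → Submodule k L) (hd : DirectSum.IsInternal ℒ) :
    Env ℒ →ₐ[k] MonoidAlgebra (Env ℒ) G :=
  RingQuot.liftAlgHom k ⟨TensorAlgebra.lift k (coact₀ ℒ hd), by
    intro x y hxy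
    cases hxy with
    | comm g h a b ha hb hgh hab =>
      simp only [map_mul, map_add, TensorAlgebra.lift_ι_apply]
      rw [coact₀_apply ℒ hd ha, coact₀_apply ℒ hd hb, coact₀_apply ℒ hd hab,
        MonoidAlgebra.single_mul_single, MonoidAlgebra.single_mul_single, ← hgh,
        ← MonoidAlgebra.single_add, inc_comm ℒ ha hb hgh hab]
    | ncomm g h a b c d ha hb hgh hc hd' hab =>
      simp only [map_mul, TensorAlgebra.lift_ι_apply]
      rw [coact₀_apply ℒ hd ha, coact₀_apply ℒ hd hb, coact₀_apply ℒ hd hc,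
        MonoidAlgebra.single_mul_single, inc_ncomm ℒ ha hb hgh hc hd' hab]⟩

lemma coact_inc (ℒ : G → Submodule k L) (hd : DirectSum.IsInternal ℒ) {g : G} {l : L}
    (hl : l ∈ ℒ g) : coact ℒ hd (inc ℒ l) = MonoidAlgebra.single g (inc ℒ l) := by
  rw [inc_apply, coact, RingQuot.liftAlgHom_mkAlgHom_apply, TensorAlgebra.lift_ι_apply,
    coact₀_apply ℒ hd hl, inc_apply]

/-- The grading. -/
noncomputable def gr (ℒ : G → Submodule k L) (hd : DirectSum.IsInternal ℒ) (g : G) :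
    Submodule k (Env ℒ) :=
  LinearMap.eqLocus (coact ℒ hd).toLinearMap (MonoidAlgebra.lsingle (R := k) (S := Env ℒ) g)

lemma mem_gr (ℒ : G → Submodule k L) (hd : DirectSum.IsInternal ℒ) (g : G) (u : Env ℒ) :
    u ∈ gr ℒ hd g ↔ coact ℒ hd u = MonoidAlgebra.single g u := Iff.rfl

lemma gr_one (ℒ : G → Submodule k L) (hd : DirectSum.IsInternal ℒ) :
    (1 : Env ℒ) ∈ gr ℒ hd 1 := by
  rw [mem_gr, map_one, MonoidAlgebra.one_def]

lemma gr_mul (ℒ : G → Submodule k L) (hd : DirectSum.IsInternal ℒ) (g h : G) (a : Env ℒ)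
    (ha : a ∈ gr ℒ hd g) (b : Env ℒ) (hb : b ∈ gr ℒ hd h) : a * b ∈ gr ℒ hd (g * h) := by
  rw [mem_gr] at *
  rw [map_mul, ha, hb, MonoidAlgebra.single_mul_single]

lemma gr_top (ℒ : G → Submodule k L) (hd : DirectSum.IsInternal ℒ) (u : Env ℒ) :
    u ∈ iSup (gr ℒ hd) := by
  induction u using env_induction ℒ with
  | halg r =>
    rw [Algebra.algebraMap_eq_smul_one]
    exact Submodule.smul_mem _ _ (Submodule.mem_iSup_of_mem 1 (gr_one ℒ hd))
  | hinc l =>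
    induction l using hom_induction hd with
    | h0 => simp
    | hadd a b ha hb => rw [map_add]; exact add_mem ha hb
    | hh g a ha => exact Submodule.mem_iSup_of_mem g (coact_inc ℒ hd ha)
  | hadd a b ha hb => exact add_mem ha hb
  | hmul a b ha hb =>
    refine Submodule.iSup_induction _ (motive := fun a => a * b ∈ iSup (gr ℒ hd)) ha ?_ (by simp)
      (fun x y hx hy => by rw [add_mul]; exact add_mem hx hy)
    intro g x hx
    refine Submodule.iSup_induction _ (motive := fun b => x * b ∈ iSup (gr ℒ hd)) hb ?_ (by simp)
      (fun x y hx hy => by rw [mul_add]; exact add_mem hx hy)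
    intro h y hy
    exact Submodule.mem_iSup_of_mem (g * h) (gr_mul ℒ hd g h x hx y hy)

lemma gr_internal (ℒ : G → Submodule k L) (hd : DirectSum.IsInternal ℒ) :
    DirectSum.IsInternal (gr ℒ hd) := by
  have key : ∀ (x : DirectSum G (fun g => gr ℒ hd g)) (g : G),
      (coact ℒ hd (DirectSum.coeAddMonoidHom (gr ℒ hd) x)).coeff g = x g := by
    intro x g
    induction x using DirectSum.induction_on with
    | zero => simp
    | of h y =>
      rw [DirectSum.coeAddMonoidHom_of, (mem_gr ℒ hd h y).1 y.2]
      by_cases hh : h = g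
      · subst hh; simp
      · rw [DirectSum.of_eq_of_ne _ _ _ (Ne.symm hh)]; simp [hh]
    | add x y hx hy => simp [hx, hy]
  constructor
  · intro x y hxy
    refine DFinsupp.ext fun g => Subtype.ext ?_
    rw [← key x g, ← key y g, hxy]
  · intro u
    have hu := gr_top ℒ hd u
    rw [Submodule.iSup_eq_range_dfinsupp_lsum] at hu
    obtain ⟨x, hx⟩ := hu
    exact ⟨x, hx⟩

/-- The universal graded enveloping algebra. -/
noncomputable def env (ℒ : G → Submodule k L) (hd : DirectSum.IsInternal ℒ) :
    GradedAlg.{u, v, max u w} k G where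
  carrier := Env ℒ
  grading := gr ℒ hd
  internal := gr_internal ℒ hd
  one_mem := gr_one ℒ hd
  mul_mem := gr_mul ℒ hd

lemma map_gr (ℒ : G → Submodule k L) (hd : DirectSum.IsInternal ℒ) (A : GradedAlg.{u, v, x} k G)
    (f : Env ℒ →ₐ[k] A.carrier) (hf : ∀ g : G, ∀ l ∈ ℒ g, f (inc ℒ l) ∈ A.grading g)
    (u : Env ℒ) : ∀ g, f ((coact ℒ hd u).coeff g) ∈ A.grading g := by
  have hs : ∀ (h : G) (u : Env ℒ), f u ∈ A.grading h →
      ∀ g, f ((MonoidAlgebra.single h u).coeff g) ∈ A.grading g := by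
    intro h u hu g
    by_cases hh : h = g
    · subst hh; simpa using hu
    · simp [hh]
  induction u using env_induction ℒ with
  | halg r =>
    intro g
    rw [Algebra.algebraMap_eq_smul_one, map_smul, map_one, MonoidAlgebra.coeff_smul_apply, map_smul]
    exact Submodule.smul_mem _ _ (hs 1 1 (by simpa using A.one_mem) g)
  | hinc l =>
    induction l using hom_induction hd with
    | h0 => simp
    | hadd a b ha hb => intro g; simpa using add_mem (ha g) (hb g)
    | hh g a ha => rw [coact_inc ℒ hd ha]; exact hs g _ (hf g a ha)
  | hadd a b ha hb => intro g; simpa using add_mem (ha g) (hb g)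
  | hmul a b ha hb =>
    intro g
    rw [map_mul, MonoidAlgebra.coeff_mul]
    simp only [Finsupp.sum, map_sum]
    refine sum_mem fun x _ => sum_mem fun y _ => ?_
    split_ifs with h
    · rw [← h, map_mul]; exact A.mul_mem _ _ _ (ha x) _ (hb y)
    · simp

/-- The induced map. -/
noncomputable def ext (ℒ : G → Submodule k L) (A : GradedAlg.{u, v, x} k G)
    (j : L →ₗ[k] A.carrier) (hj : ∀ a b : L, j ⁅a, b⁆ = j a * j b - j b * j a)
    (hg : ∀ g : G, ∀ l ∈ ℒ g, j l ∈ A.grading g) : Env ℒ →ₐ[k] A.carrier :=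
  RingQuot.liftAlgHom k ⟨TensorAlgebra.lift k j, by
    intro x y hxy
    cases hxy with
    | comm g h a b ha hb hgh hab =>
      simp only [map_mul, map_add, TensorAlgebra.lift_ι_apply, hj]
      abel
    | ncomm g h a b c d ha hb hgh hc hd' hab =>
      simp only [map_mul, TensorAlgebra.lift_ι_apply]
      have h1 := hj a b
      rw [hab, map_add] at h1
      have h2 : j a * j b - j c = j d + j b * j a := by
        rw [sub_eq_iff_eq_add, add_assoc, add_comm (j b * j a), ← add_assoc, add_comm (j d), h1]
        abel
      have hi := ((DirectSum.isInternal_submodule_iff_iSupIndep_and_iSup_eq_top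
        A.grading).1 A.internal).1.pairwiseDisjoint hgh
      have h3 : j a * j b - j c ∈ A.grading (g * h) :=
        sub_mem (A.mul_mem _ _ _ (hg _ _ ha) _ (hg _ _ hb)) (hg _ _ hc)
      have h4 : j a * j b - j c ∈ A.grading (h * g) := by
        rw [h2]
        exact add_mem (hg _ _ hd') (A.mul_mem _ _ _ (hg _ _ hb) _ (hg _ _ ha))
      exact sub_eq_zero.1 (Submodule.disjoint_def.1 hi _ h3 h4)⟩

lemma ext_inc (ℒ : G → Submodule k L) (A : GradedAlg.{u, v, x} k G)
    (j : L →ₗ[k] A.carrier) (hj : ∀ a b : L, j ⁅a, b⁆ = j a * j b - j b * j a)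
    (hg : ∀ g : G, ∀ l ∈ ℒ g, j l ∈ A.grading g) (l : L) : ext ℒ A j hj hg (inc ℒ l) = j l := by
  rw [inc_apply, ext, RingQuot.liftAlgHom_mkAlgHom_apply, TensorAlgebra.lift_ι_apply]

lemma ext_gr (ℒ : G → Submodule k L) (hd : DirectSum.IsInternal ℒ) (A : GradedAlg.{u, v, x} k G)
    (j : L →ₗ[k] A.carrier) (hj : ∀ a b : L, j ⁅a, b⁆ = j a * j b - j b * j a)
    (hg : ∀ g : G, ∀ l ∈ ℒ g, j l ∈ A.grading g) (g : G) (u : Env ℒ) (hu : u ∈ gr ℒ hd g) :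
    ext ℒ A j hj hg u ∈ A.grading g := by
  have h := map_gr ℒ hd A (ext ℒ A j hj hg)
    (fun g l hl => by rw [ext_inc]; exact hg g l hl) u g
  rw [(mem_gr ℒ hd g u).1 hu] at h
  simpa using h

lemma env_hom_ext (ℒ : G → Submodule k L) {B : Type*} [Ring B] [Algebra k B]
    (f f' : Env ℒ →ₐ[k] B) (h : ∀ l, f (inc ℒ l) = f' (inc ℒ l)) : f = f' := by
  refine AlgHom.ext fun u => ?_
  induction u using env_induction ℒ with
  | halg r => simp
  | hinc l => exact h l
  | hmul a b ha hb => rw [map_mul, map_mul, ha, hb]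
  | hadd a b ha hb => rw [map_add, map_add, ha, hb]

end NCGraded

/-- Every noncommutatively `G`-graded Lie algebra over a field has a universal
`G`-graded enveloping algebra. -/
theorem exists_universal_graded_enveloping_algebra_of_field
    {k : Type u} {G : Type v} {L : Type w}
    [Field k] [Group G] [DecidableEq G] [LieRing L] [LieAlgebra k L]
    (ℒ : G → Submodule k L)
    (hdecomp : DirectSum.IsInternal ℒ)
    (hbr : ∀ g h : G, ∀ a ∈ ℒ g, ∀ b ∈ ℒ h, ⁅a, b⁆ ∈ ℒ (g * h) ⊔ ℒ (h * g)) :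
    ∃ (U : GradedAlg.{u, v, max u w} k G) (i : L →ₗ[k] U.carrier),
      (∀ a b : L, i ⁅a, b⁆ = i a * i b - i b * i a) ∧
      (∀ g : G, ∀ l ∈ ℒ g, i l ∈ U.grading g) ∧
      ∀ (A : GradedAlg.{u, v, x} k G) (j : L →ₗ[k] A.carrier),
        (∀ a b : L, j ⁅a, b⁆ = j a * j b - j b * j a) →
        (∀ g : G, ∀ l ∈ ℒ g, j l ∈ A.grading g) →
        ∃! km : U.carrier →ₐ[k] A.carrier,
          (∀ g : G, ∀ u ∈ U.grading g, km u ∈ A.grading g) ∧ ∀ l : L, km (i l) = j l := by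
  refine ⟨NCGraded.env ℒ hdecomp, NCGraded.inc ℒ, NCGraded.inc_bracket ℒ hdecomp hbr,
    fun g l hl => NCGraded.coact_inc ℒ hdecomp hl, fun A j hj hg =>
      ⟨NCGraded.ext ℒ A j hj hg, ⟨?_, NCGraded.ext_inc ℒ A j hj hg⟩, ?_⟩⟩
  · exact fun g u hu => NCGraded.ext_gr ℒ hdecomp A j hj hg g u hu
  · rintro f ⟨-, hf⟩
    exact NCGraded.env_hom_ext ℒ f (NCGraded.ext ℒ A j hj hg)
      (fun l => (hf l).trans (NCGraded.ext_inc ℒ A j hj hg l).symm)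
end

section
/- Every inverse limit exists in the category of noncommutatively G-graded R-algebras: given an inverse system (A_α, f_{αβ}) of noncommutatively G-graded R-algebras over a preordered index set, the subalgebra Q' = ⊕_{g ∈ G} Q'_g of the product, where Q'_g consists of compatible tuples x with p_α(x) ∈ (A_α)_g for all α, is a noncommutatively G-graded R-algebra and is an inverse limit in this category. -/
universe u v w x

/-- A noncommutatively `G`-graded `R`-algebra. -/
structure NCGradedAlg (R : Type u) (G : Type v) [CommRing R] [Group G] [DecidableEq G] where
  carrier : Type x
  [ring : Ring carrier]
  [alg : Algebra R carrier]
  grading : G → Submodule R carrier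
  internal : DirectSum.IsInternal grading
  mul_mem : ∀ g h : G, ∀ a ∈ grading g, ∀ b ∈ grading h,
    a * b ∈ grading (g * h) ⊔ grading (h * g)

attribute [instance] NCGradedAlg.ring NCGradedAlg.alg

/-- The degree-`g` component `Q'_g` of the inverse limit: compatible tuples all of whose
components are homogeneous of degree `g`. -/
def limGrading {R G ι : Type*} [CommRing R] [Group G] [Preorder ι]
    {A : ι → Type*} [∀ α, Ring (A α)] [∀ α, Algebra R (A α)]
    (𝒜 : ∀ α, G → Submodule R (A α))
    (f : ∀ α β, α ≤ β → (A β →ₐ[R] A α)) : G → Submodule R (∀ α, A α) := fun g =>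
  (⨅ α, (𝒜 α g).comap (LinearMap.proj α : (∀ α, A α) →ₗ[R] A α)) ⊓
    (⨅ (α) (β) (h : α ≤ β),
      LinearMap.ker ((LinearMap.proj α : (∀ α, A α) →ₗ[R] A α) -
        (f α β h).toLinearMap ∘ₗ (LinearMap.proj β : (∀ α, A α) →ₗ[R] A β)))

theorem mem_limGrading_iff {R G ι : Type*} [CommRing R] [Group G] [Preorder ι]
    {A : ι → Type*} [∀ α, Ring (A α)] [∀ α, Algebra R (A α)]
    (𝒜 : ∀ α, G → Submodule R (A α))
    (f : ∀ α β, α ≤ β → (A β →ₐ[R] A α)) (g : G) (x : ∀ α, A α) :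
    x ∈ limGrading 𝒜 f g ↔
      (∀ α, x α ∈ 𝒜 α g) ∧ ∀ α β (h : α ≤ β), x α = f α β h (x β) := by
  simp [limGrading, Submodule.mem_iInf, sub_eq_zero]

/-- Inverse limits exist in the category of noncommutatively `G`-graded algebras:
given an inverse system of noncommutatively `G`-graded algebras over a preordered set,
the family `Q'_g` of homogeneous compatible tuples is independent, multiplies
noncommutatively gradedly, and `Q' = ⊕_g Q'_g` has the universal property of the
inverse limit in this category. -/
theorem inverse_limit_exists
    {R : Type u} {G : Type v} {ι : Type w} [CommRing R] [Group G] [DecidableEq G]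
    [Preorder ι]
    {A : ι → Type w} [∀ α, Ring (A α)] [∀ α, Algebra R (A α)]
    (𝒜 : ∀ α, G → Submodule R (A α))
    (hdec : ∀ α, DirectSum.IsInternal (𝒜 α))
    (hmul : ∀ α, ∀ g h : G, ∀ a ∈ 𝒜 α g, ∀ b ∈ 𝒜 α h,
      a * b ∈ 𝒜 α (g * h) ⊔ 𝒜 α (h * g))
    (f : ∀ α β, α ≤ β → (A β →ₐ[R] A α))
    (hfgr : ∀ α β (h : α ≤ β) (g : G), ∀ x ∈ 𝒜 β g, f α β h x ∈ 𝒜 α g)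
    (hfcomp : ∀ α β γ (h₁ : α ≤ β) (h₂ : β ≤ γ), ∀ x : A γ,
      f α γ (h₁.trans h₂) x = f α β h₁ (f β γ h₂ x))
    (hfid : ∀ α, ∀ x : A α, f α α le_rfl x = x) :
    (∀ g h : G, ∀ x ∈ limGrading 𝒜 f g, ∀ y ∈ limGrading 𝒜 f h,
        x * y ∈ limGrading 𝒜 f (g * h) ⊔ limGrading 𝒜 f (h * g)) ∧
    (iSupIndep (limGrading 𝒜 f)) ∧
    ∀ (F : NCGradedAlg.{u, v, x} R G) (u : ∀ α, F.carrier →ₐ[R] A α),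
      (∀ α (g : G), ∀ y ∈ F.grading g, u α y ∈ 𝒜 α g) →
      (∀ α β (h : α ≤ β), ∀ y : F.carrier, f α β h (u β y) = u α y) →
      ∃! v : F.carrier →ₐ[R] (∀ α, A α),
        (∀ g : G, ∀ y ∈ F.grading g, v y ∈ limGrading 𝒜 f g) ∧
        ∀ α (y : F.carrier), v y α = u α y := by
  refine ⟨?_, ?_, ?_⟩
  · intro g h x hx y hy
    rw [mem_limGrading_iff] at hx hy
    have hxy : ∀ α, (x * y) α ∈ 𝒜 α (g * h) ⊔ 𝒜 α (h * g) := fun α =>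
      hmul α g h _ (hx.1 α) _ (hy.1 α)
    have hc : ∀ α β (l : α ≤ β), (x * y) α = f α β l ((x * y) β) := by
      intro α β l
      rw [Pi.mul_apply, Pi.mul_apply, map_mul, ← hx.2 α β l, ← hy.2 α β l]
    by_cases hgh : g * h = h * g
    · apply Submodule.mem_sup_left
      rw [mem_limGrading_iff]
      refine ⟨fun α => ?_, hc⟩
      have := hxy α
      rwa [← hgh, sup_idem] at this
    · choose a ha b hb hab using fun α => Submodule.mem_sup.1 (hxy α)
      have key : ∀ α β (l : α ≤ β), a α = f α β l (a β) ∧ b α = f α β l (b β) := by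
        intro α β l
        have e : a α + b α = f α β l (a β) + f α β l (b β) := by
          rw [← map_add, hab, hab]; exact hc α β l
        have e2 : a α - f α β l (a β) = f α β l (b β) - b α := by
          rw [sub_eq_sub_iff_add_eq_add, e, add_comm]
        have hd : Disjoint (𝒜 α (g * h)) (𝒜 α (h * g)) :=
          (hdec α).submodule_iSupIndep.pairwiseDisjoint hgh
        have z : a α - f α β l (a β) = 0 := by
          refine Submodule.disjoint_def.1 hd _
            (sub_mem (ha α) (hfgr α β l _ _ (ha β))) ?_
          rw [e2]
          exact sub_mem (hfgr α β l _ _ (hb β)) (hb α)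
        refine ⟨sub_eq_zero.1 z, ?_⟩
        rw [z] at e2
        exact (sub_eq_zero.1 e2.symm).symm
      refine Submodule.mem_sup.2 ⟨a, ?_, b, ?_, funext hab⟩
      · exact (mem_limGrading_iff 𝒜 f _ _).2 ⟨ha, fun α β l => (key α β l).1⟩
      · exact (mem_limGrading_iff 𝒜 f _ _).2 ⟨hb, fun α β l => (key α β l).2⟩
  · intro g
    rw [Submodule.disjoint_def]
    intro x hx hx'
    funext α
    refine Submodule.disjoint_def.1 ((hdec α).submodule_iSupIndep g) _
      (((mem_limGrading_iff 𝒜 f _ _).1 hx).1 α) ?_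
    have hle : (⨆ (j) (_ : j ≠ g), limGrading 𝒜 f j) ≤
        (⨆ (j) (_ : j ≠ g), 𝒜 α j).comap
          (LinearMap.proj α : (∀ α, A α) →ₗ[R] A α) := by
      refine iSup₂_le fun j hj y hy => ?_
      exact (le_iSup₂_of_le (f := fun j (_ : j ≠ g) => 𝒜 α j) j hj le_rfl)
        (((mem_limGrading_iff 𝒜 f _ _).1 hy).1 α)
    exact hle hx'
  · intro F u hu huf
    refine ⟨Pi.algHom R A u, ⟨fun g y hy => ?_, fun α y => rfl⟩, ?_⟩
    · exact (mem_limGrading_iff 𝒜 f _ _).2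
        ⟨fun α => hu α g y hy, fun α β l => (huf α β l y).symm⟩
    · rintro v ⟨-, hv⟩
      ext y α
      exact hv α y
end
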